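/- For every α ∈ (0,1), every β > 0, every C > 0, every C' > 0, every P ∈ Σ(α,β,C,C'), every n ≥ 1 and every 1 ≤ k ≤ n, one has E_P(C_{n,k}) ≤ 2 n^α L_α(P) · (Γ(k−α)/Γ(k)) · ( 1 + 3C' Γ(k−α+β)/(Γ(k−α) n^β) ). -/

import Mathlib

open MeasureTheory ProbabilityTheory Real Filter

noncomputable section

/-- The law of an i.i.d. sample of size `n` from the discrete distribution `P` on `ℕ`. -/
def sampleMeasure (P : PMF ℕ) (n : ℕ) : Measure (Fin n → ℕ) :=
  Measure.pi fun _ => P.toMeasure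

/-- The probability mass of symbol `j` under `P`, as a real number. -/
def pReal (P : PMF ℕ) (j : ℕ) : ℝ := (P j).toReal

/-- Empirical frequency of the symbol `j` in the sample `ω`. -/
def freq {n : ℕ} (ω : Fin n → ℕ) (j : ℕ) : ℕ :=
  (Finset.univ.filter fun i => ω i = j).card

/-- `C_{n,k}`: the number of distinct symbols appearing at least `k` times in the sample. -/
def Ccount {n : ℕ} (ω : Fin n → ℕ) (k : ℕ) : ℝ :=
  ∑' j, if k ≤ freq ω j then 1 else 0

/-- The tail function `F̄_P(x) = #{j : p_j > x}`. -/
def tailF (P : PMF ℕ) (x : ℝ) : ℕ := Set.ncard {j | x < pReal P j}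

/-- `P ∈ Σ(α,β,C,C')` with `Lα = L_α(P) = lim_{x→0} x^α F̄_P(x)`. -/
def inSigmaClass (α β C C' : ℝ) (P : PMF ℕ) (Lα : ℝ) : Prop :=
  Tendsto (fun x => x ^ α * (tailF P x : ℝ)) (nhdsWithin 0 (Set.Ioi 0)) (nhds Lα) ∧
  C ≤ Lα ∧
  ∀ x ∈ Set.Ioo (0 : ℝ) 1,
    x ^ (-β) * |(tailF P x : ℝ) / (Lα * x ^ (-α)) - 1| ≤ C'

lemma gam_up (n : ℕ) (hn : 1 ≤ n) (s : ℝ) (hs : 0 ≤ s) :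
    (n : ℝ) ^ s * Real.Gamma (n + 1) ≤ Real.Gamma (n + 1 + s) := by
  have hn0 : (0 : ℝ) < n := by exact_mod_cast hn
  rcases hs.eq_or_lt with rfl | hs
  · simp
  have h := (convexOn_iff_slope_mono_adjacent.mp Real.convexOn_log_Gamma).2
    (x := (n : ℝ)) (y := n + 1) (z := n + 1 + s) hn0 (by simp; linarith) (by linarith) (by linarith)
  have g0 := Real.Gamma_pos_of_pos hn0
  have g1 := Real.Gamma_pos_of_pos (show (0 : ℝ) < n + 1 by linarith)
  have g2 := Real.Gamma_pos_of_pos (show (0 : ℝ) < n + 1 + s by linarith)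
  simp only [Function.comp_apply] at h
  rw [show (n : ℝ) + 1 - n = 1 by ring, show (n : ℝ) + 1 + s - (n + 1) = s by ring, div_one,
    le_div_iff₀ hs] at h
  have e : Real.log (Real.Gamma (n + 1)) = Real.log n + Real.log (Real.Gamma n) := by
    rw [Real.Gamma_add_one hn0.ne', Real.log_mul hn0.ne' g0.ne']
  rw [← Real.log_le_log_iff (by positivity) g2, Real.log_mul (by positivity) g1.ne',
    Real.log_rpow hn0]
  nlinarith

lemma gam_down (n : ℕ) (hn : 1 ≤ n) (a : ℝ) (ha : 0 ≤ a) (ha1 : a < 1) :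
    Real.Gamma (n + 1) ≤ 2 * (n : ℝ) ^ a * Real.Gamma (n + 1 - a) := by
  have hn0 : (1 : ℝ) ≤ n := by exact_mod_cast hn
  rcases ha.eq_or_lt with rfl | ha
  · have := Real.Gamma_pos_of_pos (show (0 : ℝ) < n + 1 by linarith)
    simp; linarith
  have hp : (0 : ℝ) < n + 1 - a := by linarith
  have g := Real.Gamma_pos_of_pos hp
  have h := Real.Gamma_mul_add_mul_le_rpow_Gamma_mul_rpow_Gamma (s := n + 1 - a)
    (t := n + 1 - a + 1) (a := 1 - a) (b := a) hp (by linarith) (by linarith) ha (by ring)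
  rw [show (1 - a) * ((n : ℝ) + 1 - a) + a * (n + 1 - a + 1) = n + 1 by ring,
    Real.Gamma_add_one hp.ne', Real.mul_rpow hp.le g.le] at h
  have e : Real.Gamma (n + 1 - a) ^ (1 - a) * Real.Gamma (n + 1 - a) ^ a
      = Real.Gamma (n + 1 - a) := by
    rw [← Real.rpow_add g]; simp
  have h2 : ((n : ℝ) + 1 - a) ^ a ≤ 2 * (n : ℝ) ^ a := by
    calc ((n : ℝ) + 1 - a) ^ a ≤ (2 * n : ℝ) ^ a := by
          apply Real.rpow_le_rpow hp.le _ ha.le; linarith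
      _ = 2 ^ a * (n : ℝ) ^ a := Real.mul_rpow (by norm_num) (by linarith)
      _ ≤ 2 * (n : ℝ) ^ a := by
          gcongr
          calc (2 : ℝ) ^ a ≤ 2 ^ (1 : ℝ) := Real.rpow_le_rpow_of_exponent_le (by norm_num) ha1.le
            _ = 2 := by simp
  calc _ ≤ _ := h
    _ = ((n : ℝ) + 1 - a) ^ a * Real.Gamma (n + 1 - a) := by
        rw [mul_left_comm, e]
    _ ≤ _ := by gcongr

lemma gam_both (n : ℕ) (hn : 1 ≤ n) (s : ℝ) (hs : -1 < s) :
    Real.Gamma (n + 1) * (n : ℝ) ^ s ≤ 2 * Real.Gamma (n + 1 + s) := by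
  have hn0 : (1 : ℝ) ≤ n := by exact_mod_cast hn
  have g2 := Real.Gamma_pos_of_pos (show (0 : ℝ) < n + 1 + s by linarith)
  rcases le_total 0 s with h | h
  · have := gam_up n hn s h
    linarith
  · have := gam_down n hn (-s) (by linarith) (by linarith)
    rw [Real.rpow_neg (by linarith), sub_neg_eq_add] at this
    have hp : (0 : ℝ) < (n : ℝ) ^ s := by positivity
    calc _ ≤ (2 * ((n : ℝ) ^ s)⁻¹ * Real.Gamma (n + 1 + s)) * (n : ℝ) ^ s := by gcongr
      _ = _ := by field_simp

lemma bern_deriv (n k : ℕ) (hk : k + 1 ≤ n) :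
    Polynomial.derivative (∑ i ∈ Finset.Ico (k + 1) (n + 1), bernsteinPolynomial ℝ n i)
      = n * bernsteinPolynomial ℝ (n - 1) k := by
  rw [Polynomial.derivative_sum, ← Finset.sum_Ico_add' _ k n 1]
  simp_rw [bernsteinPolynomial.derivative_succ]
  rw [← Finset.mul_sum]
  congr 1
  have := Finset.sum_Ico_sub (fun i => bernsteinPolynomial ℝ (n - 1) i) (show k ≤ n by omega)
  have h0 : bernsteinPolynomial ℝ (n - 1) n = 0 :=
    bernsteinPolynomial.eq_zero_of_lt ℝ (by omega)
  rw [← neg_inj, ← Finset.sum_neg_distrib]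
  simpa [h0] using this

lemma bern_int (n k : ℕ) (hk : k + 1 ≤ n) (p : ℝ) :
    ∑ i ∈ Finset.Ico (k + 1) (n + 1), (bernsteinPolynomial ℝ n i).eval p
      = ∫ x in (0 : ℝ)..p, n * (bernsteinPolynomial ℝ (n - 1) k).eval x := by
  set q := ∑ i ∈ Finset.Ico (k + 1) (n + 1), bernsteinPolynomial ℝ n i with hq
  have h : ∀ x, HasDerivAt (fun x => q.eval x) (n * (bernsteinPolynomial ℝ (n - 1) k).eval x) x := by
    intro x
    have := q.hasDerivAt x
    rw [hq, bern_deriv n k hk] at this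
    simpa using this
  rw [intervalIntegral.integral_eq_sub_of_hasDerivAt (f := fun x => q.eval x) (fun x _ => h x)
    (Continuous.intervalIntegrable (by fun_prop) _ _)]
  rw [hq]
  simp only [Polynomial.eval_finsetSum]
  have : ∑ i ∈ Finset.Ico (k + 1) (n + 1), (bernsteinPolynomial ℝ n i).eval 0 = 0 := by
    apply Finset.sum_eq_zero
    intro i hi
    rw [bernsteinPolynomial.eval_at_0]
    simp at hi
    rw [if_neg (by omega)]
  rw [this, sub_zero]

lemma beta_nat (k r : ℕ) : ProbabilityTheory.beta ((k + 1 : ℕ) : ℝ) ((r + 1 : ℕ) : ℝ) =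
    1 / ((k + 1 + r : ℕ) * ((k + r).choose k : ℕ)) := by
  unfold ProbabilityTheory.beta
  have h := Nat.add_choose_mul_factorial_mul_factorial k r
  have h' : ((k + r).choose k : ℝ) * k.factorial * r.factorial = (k + r).factorial := by
    rw [← Nat.choose_symm_add] at h
    exact_mod_cast h
  have e : ((k + 1 : ℕ) : ℝ) + ((r + 1 : ℕ) : ℝ) = ((k + r + 1 : ℕ) : ℝ) + 1 := by
    push_cast; ring
  rw [e, Real.Gamma_nat_eq_factorial]
  push_cast
  rw [Real.Gamma_nat_eq_factorial, Real.Gamma_nat_eq_factorial, Nat.factorial_succ]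
  push_cast
  rw [← h']
  have : 0 < (k + r).choose k := Nat.choose_pos (by omega)
  field_simp
  ring

lemma tail_eq (k r : ℕ) (p : ℝ) (hp : 0 ≤ p) (hp1 : p ≤ 1) :
    ENNReal.ofReal (∑ i ∈ Finset.Ico (k + 1) (k + 1 + r + 1),
      (bernsteinPolynomial ℝ (k + 1 + r) i).eval p)
      = ∫⁻ x, (Set.Iio p).indicator (betaPDF ((k + 1 : ℕ) : ℝ) ((r + 1 : ℕ) : ℝ)) x := by
  rw [bern_int _ _ (by omega), intervalIntegral.integral_of_le hp,
    MeasureTheory.integral_Ioc_eq_integral_Ioo, ofReal_integral_eq_lintegral_ofReal]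
  · rw [← lintegral_indicator measurableSet_Ioo]
    congr 1
    ext x
    by_cases hx : x ∈ Set.Ioo 0 p
    · rw [Set.indicator_of_mem hx, Set.indicator_of_mem (by exact hx.2),
        betaPDF_of_pos_lt_one hx.1 (by linarith [hx.2]), beta_nat]
      congr 1
      simp only [bernsteinPolynomial, Polynomial.eval_mul, Polynomial.eval_natCast,
        Polynomial.eval_pow, Polynomial.eval_sub, Polynomial.eval_one, Polynomial.eval_X]
      rw [show k + 1 + r - 1 = k + r by omega, show k + r - k = r by omega]
      push_cast
      rw [add_sub_cancel_right, add_sub_cancel_right, Real.rpow_natCast, Real.rpow_natCast]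
      simp only [one_div, inv_inv]
      ring
    · rw [Set.indicator_of_notMem hx]
      by_cases h2 : x < p
      · rw [Set.indicator_of_mem (by exact h2), betaPDF_eq_zero_of_nonpos]
        by_contra! h
        exact hx ⟨h, h2⟩
      · rw [Set.indicator_of_notMem (by simpa using h2)]
  · exact ((Continuous.intervalIntegrable (by fun_prop) 0 p).1).mono_set Set.Ioo_subset_Ioc_self
  · refine (ae_restrict_iff' measurableSet_Ioo).2 (Eventually.of_forall fun x hx => ?_)
    have h1 := hx.1
    have h2 : 0 ≤ 1 - x := by linarith [hx.2]
    simp [bernsteinPolynomial]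
    positivity

lemma pReal_nonneg (P : PMF ℕ) (j : ℕ) : 0 ≤ pReal P j := ENNReal.toReal_nonneg

lemma pReal_le_one (P : PMF ℕ) (j : ℕ) : pReal P j ≤ 1 :=
  ENNReal.toReal_le_of_le_ofReal zero_le_one (by simpa using P.coe_le_one j)

lemma toMeasure_single (P : PMF ℕ) (j : ℕ) : P.toMeasure {j} = ENNReal.ofReal (pReal P j) := by
  rw [PMF.toMeasure_apply_singleton _ _ (measurableSet_singleton j), pReal,
    ENNReal.ofReal_toReal (P.apply_ne_top j)]

lemma toMeasure_compl (P : PMF ℕ) (j : ℕ) :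
    P.toMeasure {j}ᶜ = ENNReal.ofReal (1 - pReal P j) := by
  rw [prob_compl_eq_one_sub (measurableSet_singleton j), toMeasure_single,
    ENNReal.ofReal_sub _ (pReal_nonneg P j), ENNReal.ofReal_one]

lemma fiber_le (P : PMF ℕ) (n j : ℕ) (A : Finset (Fin n)) :
    sampleMeasure P n {ω | (Finset.univ.filter fun i => ω i = j) = A} ≤
      ENNReal.ofReal (pReal P j ^ A.card * (1 - pReal P j) ^ (n - A.card)) := by
  have hsub : {ω : Fin n → ℕ | (Finset.univ.filter fun i => ω i = j) = A} ⊆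
      Set.pi Set.univ (fun i => if i ∈ A then ({j} : Set ℕ) else {j}ᶜ) := by
    rintro ω rfl i -
    by_cases h : ω i = j <;> simp [h]
  refine (measure_mono hsub).trans ?_
  unfold sampleMeasure
  rw [Measure.pi_pi]
  have h1 := pReal_nonneg P j
  have h2 := pReal_le_one P j
  rw [ENNReal.ofReal_mul (by positivity), ENNReal.ofReal_pow h1, ENNReal.ofReal_pow (by linarith)]
  have : ∀ i, P.toMeasure (if i ∈ A then ({j} : Set ℕ) else {j}ᶜ) =
      if i ∈ A then ENNReal.ofReal (pReal P j) else ENNReal.ofReal (1 - pReal P j) := by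
    intro i
    split_ifs
    · exact toMeasure_single P j
    · exact toMeasure_compl P j
  simp_rw [this]
  rw [Finset.prod_ite, Finset.prod_const, Finset.prod_const]
  have c1 : (Finset.univ.filter fun i => i ∈ A) = A := by ext; simp
  have c2 : (Finset.univ.filter fun i => i ∉ A) = Aᶜ := by ext; simp
  rw [c1, c2, Finset.card_compl, Fintype.card_fin]

lemma prob_le (P : PMF ℕ) (n k j : ℕ) :
    sampleMeasure P n {ω | k ≤ freq ω j} ≤
      ENNReal.ofReal (∑ i ∈ Finset.Ico k (n + 1),
        (bernsteinPolynomial ℝ n i).eval (pReal P j)) := by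
  have h1 := pReal_nonneg P j
  have h2 : 0 ≤ 1 - pReal P j := by linarith [pReal_le_one P j]
  have hsub : {ω : Fin n → ℕ | k ≤ freq ω j} ⊆
      ⋃ A ∈ (Finset.univ : Finset (Fin n)).powerset.filter (fun A => k ≤ A.card),
        {ω : Fin n → ℕ | (Finset.univ.filter fun i => ω i = j) = A} := by
    intro ω hω
    simp only [Set.mem_iUnion]
    exact ⟨_, by simpa [freq] using hω, rfl⟩
  refine (measure_mono hsub).trans ((measure_biUnion_finset_le _ _).trans ?_)
  refine (Finset.sum_le_sum fun A _ => fiber_le P n j A).trans ?_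
  rw [← ENNReal.ofReal_sum_of_nonneg (fun A _ => by positivity)]
  apply ENNReal.ofReal_le_ofReal
  rw [Finset.sum_filter, Finset.sum_powerset_apply_card (fun m => if k ≤ m then
    pReal P j ^ m * (1 - pReal P j) ^ (n - m) else 0)]
  rw [Finset.card_univ, Fintype.card_fin]
  have : Finset.Ico k (n + 1) = (Finset.range (n + 1)).filter (fun m => k ≤ m) := by
    ext; simp; omega
  rw [this, Finset.sum_filter]
  apply le_of_eq
  refine Finset.sum_congr rfl fun m _ => ?_
  split_ifs
  · simp [bernsteinPolynomial, mul_assoc]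
  · simp

lemma Ccount_le {n : ℕ} (ω : Fin n → ℕ) (k : ℕ) :
    ENNReal.ofReal ‖Ccount ω k‖ ≤
      ∑' j, ({ω : Fin n → ℕ | k ≤ freq ω j}).indicator (fun _ => (1 : ENNReal)) ω := by
  have hnn : ∀ j, (0 : ℝ) ≤ if k ≤ freq ω j then 1 else 0 := fun j => by split_ifs <;> simp
  have h0 : 0 ≤ Ccount ω k := tsum_nonneg hnn
  rw [Real.norm_of_nonneg h0]
  unfold Ccount
  by_cases hs : Summable (fun j => if k ≤ freq ω j then (1 : ℝ) else 0)
  · rw [ENNReal.ofReal_tsum_of_nonneg hnn hs]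
    refine ENNReal.tsum_le_tsum fun j => ?_
    by_cases h : k ≤ freq ω j <;> simp [h]
  · rw [tsum_eq_zero_of_not_summable hs]; simp

lemma tailF_eq (P : PMF ℕ) (x : ℝ) (hx : 0 < x) :
    ∑' j, (Set.Iio (pReal P j)).indicator (fun _ => (1 : ENNReal)) x = (tailF P x : ENNReal) := by
  have hsum : Summable (pReal P) := ENNReal.summable_toReal (by rw [P.tsum_coe]; simp)
  have hfin : {j | x < pReal P j}.Finite := by
    have := hsum.tendsto_cofinite_zero.eventually (gt_mem_nhds hx)
    refine Set.Finite.subset (Filter.eventually_cofinite.1 this) fun j hj => ?_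
    simp only [Set.mem_setOf_eq, not_lt] at hj ⊢
    exact hj.le
  have : ∀ j, (Set.Iio (pReal P j)).indicator (fun _ => (1 : ENNReal)) x =
      ({j | x < pReal P j} : Set ℕ).indicator (fun _ => (1 : ENNReal)) j := by
    intro j
    by_cases h : x < pReal P j <;> simp [h]
  simp_rw [this]
  rw [← tsum_subtype, ENNReal.tsum_set_one, tailF, ← hfin.cast_ncard_eq]
  simp

lemma expect_le (P : PMF ℕ) (k r : ℕ) :
    ∫⁻ ω, ENNReal.ofReal ‖Ccount ω (k + 1)‖ ∂ sampleMeasure P (k + 1 + r) ≤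
      ∫⁻ x, (tailF P x : ENNReal) * betaPDF ((k + 1 : ℕ) : ℝ) ((r + 1 : ℕ) : ℝ) x := by
  have hm : Measurable (betaPDF ((k + 1 : ℕ) : ℝ) ((r + 1 : ℕ) : ℝ)) :=
    (measurable_betaPDFReal _ _).ennreal_ofReal
  refine (lintegral_mono fun ω => Ccount_le ω (k + 1)).trans ?_
  have hmeas : ∀ j, MeasurableSet {ω : Fin (k + 1 + r) → ℕ | k + 1 ≤ freq ω j} :=
    fun j => (Set.to_countable _).measurableSet
  rw [lintegral_tsum fun j => (measurable_const.indicator (hmeas j)).aemeasurable]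
  have : ∀ j, ∫⁻ ω, ({ω : Fin (k + 1 + r) → ℕ | k + 1 ≤ freq ω j}).indicator
      (fun _ => (1 : ENNReal)) ω ∂ sampleMeasure P (k + 1 + r) ≤
      ∫⁻ x, (Set.Iio (pReal P j)).indicator (betaPDF ((k + 1 : ℕ) : ℝ) ((r + 1 : ℕ) : ℝ)) x := by
    intro j
    rw [← tail_eq _ _ _ (pReal_nonneg P j) (pReal_le_one P j), lintegral_indicator (hmeas j)]
    simpa using prob_le P (k + 1 + r) (k + 1) j
  refine (ENNReal.tsum_le_tsum this).trans ?_
  rw [← lintegral_tsum fun j => (hm.indicator measurableSet_Iio).aemeasurable]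
  refine lintegral_mono fun x => ?_
  rcases le_or_gt x 0 with hx | hx
  · simp [Set.indicator_apply, betaPDF_eq_zero_of_nonpos hx]
  · rw [← tailF_eq P x hx, ← ENNReal.tsum_mul_right]
    refine ENNReal.tsum_le_tsum fun j => ?_
    by_cases h : x < pReal P j <;> simp [h]

lemma tail_bound {α β C C' : ℝ} {P : PMF ℕ} {L : ℝ} (hC : 0 < C)
    (hP : inSigmaClass α β C C' P L) (x : ℝ) (hx : x ∈ Set.Ioo (0 : ℝ) 1) :
    (tailF P x : ℝ) ≤ L * (x ^ (-α) + C' * x ^ (β - α)) := by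
  obtain ⟨-, hL, h⟩ := hP
  have hL : 0 < L := by linarith
  have hx0 := hx.1
  have h := h x hx
  have h1 := Real.rpow_pos_of_pos hx0 (-α)
  have h2 := Real.rpow_pos_of_pos hx0 β
  rw [Real.rpow_neg hx0.le, inv_mul_le_iff₀ h2] at h
  have h3 := (le_abs_self _).trans h
  rw [sub_le_iff_le_add, div_le_iff₀ (by positivity)] at h3
  have : x ^ (β - α) = x ^ β * x ^ (-α) := by rw [← Real.rpow_add hx0]; ring_nf
  rw [this]
  linarith

lemma shift_pdf (a b s x : ℝ) (ha : 0 < a) (hb : 0 < b) (has : 0 < a + s)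
    (hx : x ∈ Set.Ioo (0 : ℝ) 1) :
    x ^ s * betaPDFReal a b x =
      (ProbabilityTheory.beta (a + s) b / ProbabilityTheory.beta a b) * betaPDFReal (a + s) b x := by
  have := beta_pos ha hb
  have := beta_pos has hb
  unfold betaPDFReal
  have hx' : 0 < x ∧ x < 1 := hx
  rw [if_pos hx', if_pos hx', show a + s - 1 = s + (a - 1) by ring, Real.rpow_add hx.1]
  field_simp

lemma beta_ratio (n : ℕ) (hn : 1 ≤ n) (a b s : ℝ) (ha : 0 < a) (hb : 0 < b) (has : 0 < a + s)
    (hs : -1 < s) (hab : a + b = n + 1) :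
    ProbabilityTheory.beta (a + s) b / ProbabilityTheory.beta a b ≤
      2 * (Real.Gamma (a + s) / Real.Gamma a) * (n : ℝ) ^ (-s) := by
  have hn0 : (0 : ℝ) < n := by exact_mod_cast hn
  have g := gam_both n hn s hs
  have g1 := Real.Gamma_pos_of_pos ha
  have g2 := Real.Gamma_pos_of_pos hb
  have g3 := Real.Gamma_pos_of_pos has
  have g4 := Real.Gamma_pos_of_pos (show (0 : ℝ) < n + 1 by positivity)
  have g5 := Real.Gamma_pos_of_pos (show (0 : ℝ) < n + 1 + s by linarith)
  have hp : (0 : ℝ) < (n : ℝ) ^ s := by positivity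
  unfold ProbabilityTheory.beta
  rw [hab, show a + s + b = n + 1 + s by linarith, Real.rpow_neg hn0.le]
  have e : Real.Gamma (a + s) * Real.Gamma b / Real.Gamma (n + 1 + s) /
      (Real.Gamma a * Real.Gamma b / Real.Gamma (n + 1)) =
      (Real.Gamma (a + s) / Real.Gamma a) * (Real.Gamma (n + 1) / Real.Gamma (n + 1 + s)) := by
    field_simp
  rw [e, mul_comm 2, mul_assoc]
  gcongr
  rw [div_le_iff₀ g5, ← div_eq_mul_inv, div_mul_eq_mul_div, le_div_iff₀ hp]
  exact g

theorem expected_Ccount_upper_bound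
    (α β C C' : ℝ) (hα : α ∈ Set.Ioo (0 : ℝ) 1) (hβ : 0 < β) (hC : 0 < C) (hC' : 0 < C')
    (P : PMF ℕ) (Lα : ℝ) (hP : inSigmaClass α β C C' P Lα)
    (n k : ℕ) (hn : 1 ≤ n) (hk : 1 ≤ k) (hkn : k ≤ n) :
    (∫ ω, Ccount ω k ∂ sampleMeasure P n) ≤
      2 * (n : ℝ) ^ α * Lα * (Real.Gamma (k - α) / Real.Gamma k) *
        (1 + 3 * C' * Real.Gamma (k - α + β) / (Real.Gamma (k - α) * (n : ℝ) ^ β)) := by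
  have hL : 0 < Lα := hC.trans_le hP.2.1
  obtain ⟨hα0, hα1⟩ := hα
  have hn0 : (0 : ℝ) < n := by exact_mod_cast hn
  have hk1 : (1 : ℝ) ≤ k := by exact_mod_cast hk
  have hk0 : (0 : ℝ) < k := by linarith
  have g0 := Real.Gamma_pos_of_pos hk0
  have g1 := Real.Gamma_pos_of_pos (show 0 < (k : ℝ) - α by linarith)
  have g2 := Real.Gamma_pos_of_pos (show 0 < (k : ℝ) - α + β by linarith)
  obtain ⟨b, hb, hb0, hE⟩ : ∃ b : ℝ, (k : ℝ) + b = n + 1 ∧ 0 < b ∧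
      ∫⁻ ω, ENNReal.ofReal ‖Ccount ω k‖ ∂ sampleMeasure P n ≤
        ∫⁻ x, (tailF P x : ENNReal) * betaPDF k b x := by
    obtain ⟨m, rfl⟩ : ∃ m, k = m + 1 := ⟨k - 1, by omega⟩
    obtain ⟨r, rfl⟩ := Nat.exists_eq_add_of_le hkn
    exact ⟨((r + 1 : ℕ) : ℝ), by push_cast; ring, by positivity, expect_le P m r⟩
  set A := ProbabilityTheory.beta (k + -α) b / ProbabilityTheory.beta k b with hA
  set B := ProbabilityTheory.beta (k + (β - α)) b / ProbabilityTheory.beta k b with hB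
  have p0 := beta_pos hk0 hb0
  have pA := beta_pos (show 0 < (k : ℝ) + -α by linarith) hb0
  have pB := beta_pos (show 0 < (k : ℝ) + (β - α) by linarith) hb0
  have hA0 : 0 < A := by positivity
  have hB0 : 0 < B := by positivity
  have key : ∫⁻ x, (tailF P x : ENNReal) * betaPDF k b x ≤
      ENNReal.ofReal (Lα * (A + C' * B)) := by
    calc _ ≤ ∫⁻ x, (ENNReal.ofReal (Lα * A) * betaPDF (k + -α) b x +
            ENNReal.ofReal (Lα * C' * B) * betaPDF (k + (β - α)) b x) := by
          refine lintegral_mono fun x => ?_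
          by_cases hx : x ∈ Set.Ioo (0 : ℝ) 1
          · have q0 := (betaPDFReal_pos hx.1 hx.2 hk0 hb0).le
            have qA := (betaPDFReal_pos hx.1 hx.2 (show 0 < (k : ℝ) + -α by linarith) hb0).le
            have qB :=
              (betaPDFReal_pos hx.1 hx.2 (show 0 < (k : ℝ) + (β - α) by linarith) hb0).le
            unfold betaPDF
            rw [← ENNReal.ofReal_natCast, ← ENNReal.ofReal_mul (by positivity),
              ← ENNReal.ofReal_mul (by positivity), ← ENNReal.ofReal_mul (by positivity),
              ← ENNReal.ofReal_add (by positivity) (by positivity)]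
            apply ENNReal.ofReal_le_ofReal
            have s1 := shift_pdf k b (-α) x hk0 hb0 (by linarith) hx
            have s2 := shift_pdf k b (β - α) x hk0 hb0 (by linarith) hx
            calc _ ≤ Lα * (x ^ (-α) + C' * x ^ (β - α)) * betaPDFReal k b x :=
                  mul_le_mul_of_nonneg_right (tail_bound hC hP x hx) q0
              _ = Lα * (x ^ (-α) * betaPDFReal k b x) +
                    Lα * C' * (x ^ (β - α) * betaPDFReal k b x) := by ring
              _ = _ := by rw [s1, s2]; ring
          · have : betaPDF k b x = 0 := by
              rw [betaPDF_eq, if_neg (by exact hx)]; simp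
            rw [this]; simp
      _ = _ := by
          have m1 : Measurable (betaPDF (k + -α) b) := (measurable_betaPDFReal _ _).ennreal_ofReal
          have m2 : Measurable (betaPDF (k + (β - α)) b) :=
            (measurable_betaPDFReal _ _).ennreal_ofReal
          rw [lintegral_add_left (m1.const_mul _), lintegral_const_mul _ m1,
            lintegral_const_mul _ m2, lintegral_betaPDF_eq_one (by linarith) hb0,
            lintegral_betaPDF_eq_one (by linarith) hb0, mul_one, mul_one,
            ← ENNReal.ofReal_add (by positivity) (by positivity)]
          congr 1; ring
  have h1 : (∫ ω, Ccount ω k ∂ sampleMeasure P n) ≤ Lα * (A + C' * B) := by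
    refine (le_abs_self _).trans ?_
    rw [← Real.norm_eq_abs]
    refine (norm_integral_le_lintegral_norm _).trans ?_
    exact ENNReal.toReal_le_of_le_ofReal (by positivity) (hE.trans key)
  have rA := beta_ratio n hn k b (-α) hk0 hb0 (by linarith) (by linarith) hb
  have rB := beta_ratio n hn k b (β - α) hk0 hb0 (by linarith) (by linarith) hb
  rw [← hA, neg_neg, ← sub_eq_add_neg] at rA
  rw [← hB, show (k : ℝ) + (β - α) = k - α + β by ring, show -(β - α) = α - β by ring,
    Real.rpow_sub hn0] at rB
  have hna : (0 : ℝ) < (n : ℝ) ^ α := by positivity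
  have hnb : (0 : ℝ) < (n : ℝ) ^ β := by positivity
  set G := Real.Gamma (k - α + β) / Real.Gamma k * ((n : ℝ) ^ α / (n : ℝ) ^ β) with hG
  have hG0 : 0 < G := by positivity
  calc _ ≤ _ := h1
    _ ≤ Lα * (2 * (Real.Gamma (k - α) / Real.Gamma k) * (n : ℝ) ^ α + C' * (2 * G)) := by
        have : B ≤ 2 * G := by rw [hG]; linarith
        gcongr
    _ ≤ Lα * (2 * (Real.Gamma (k - α) / Real.Gamma k) * (n : ℝ) ^ α + 3 * C' * (2 * G)) := by
        gcongr
        nlinarith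
    _ = _ := by
        rw [hG]
        field_simp

end
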